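/- arXiv:2202.02010 — 2 statements merged into one kernel-verified Lean document; each statement's English description precedes it below -/
import Mathlib

section
/- Let G=(V,E) be a finite simple undirected graph, let C_1,…,C_k be a partition of V into type classes, let S ⊆ V, and set x_i = |S ∩ C_i| for each i. Suppose that no non-empty set T ⊆ V with |T ∩ C_i| ∈ {0, x_i − 1, x_i} for every i and (|T ∩ C_1|,…,|T ∩ C_k|) ≠ (x_1,…,x_k) is a defensive alliance in G. Then no non-empty set T ⊆ V with |T ∩ C_i| ≤ x_i for every i and (|T ∩ C_1|,…,|T ∩ C_k|) ≠ (x_1,…,x_k) is a defensive alliance in G. (In particular, under the hypothesis, no proper subset of S is a defensive alliance.) -/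
/-!
A defensive alliance `T` stays one when it is enlarged by vertices of classes it already meets.
Old members only gain neighbours inside (`IsProtected.mono`), and a new member has exactly as many
neighbours inside and outside as an old member of its class, because the two are twins lying on the
same side (`degIn_eq_of_twin`).

Given an alliance `T` strictly below the counts `x_i = |S ∩ C_i|`, fix a class `C_j` with
`|T ∩ C_j| < x_j` and fill every class met by `T` up to `x_i` vertices, except `C_j`, which is
filled up to `x_j - 1` only if it is met. The result is an alliance with counts in
`{0, x_i - 1, x_i}` that differ from `x` at `j`, contradicting the hypothesis.
-/

open Finset

/-- Number of neighbours of `v` (in graph `G`) lying in `S`. -/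
def degIn {V : Type*} [Fintype V] [DecidableEq V] (G : SimpleGraph V) [DecidableRel G.Adj]
    (S : Finset V) (v : V) : ℕ :=
  (S.filter (fun u => G.Adj v u)).card

/-- `v` is protected w.r.t. `S` : `d_S(v) + 1 ≥ d_{S^c}(v)`. -/
def IsProtected {V : Type*} [Fintype V] [DecidableEq V] (G : SimpleGraph V) [DecidableRel G.Adj]
    (S : Finset V) (v : V) : Prop :=
  degIn G Sᶜ v ≤ degIn G S v + 1

/-- `S` is a defensive alliance: non-empty and every vertex of `S` is protected. -/
def IsDefensiveAlliance {V : Type*} [Fintype V] [DecidableEq V] (G : SimpleGraph V)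
    [DecidableRel G.Adj] (S : Finset V) : Prop :=
  S.Nonempty ∧ ∀ v ∈ S, IsProtected G S v

/-- `S` is a globally minimal defensive alliance: a defensive alliance no proper
subset of which is a defensive alliance. -/
def IsGloballyMinimalDA {V : Type*} [Fintype V] [DecidableEq V] (G : SimpleGraph V)
    [DecidableRel G.Adj] (S : Finset V) : Prop :=
  IsDefensiveAlliance G S ∧ ∀ T ⊂ S, ¬ IsDefensiveAlliance G T

/-- `v ∈ S` is marginally protected: moving any neighbour of `v` lying in `S`
out of `S` leaves `v` unprotected. -/
def IsMarginallyProtected {V : Type*} [Fintype V] [DecidableEq V] (G : SimpleGraph V)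
    [DecidableRel G.Adj] (S : Finset V) (v : V) : Prop :=
  ∀ u ∈ S, G.Adj v u → ¬ IsProtected G (S.erase u) v


theorem degIn_mono {V : Type*} [Fintype V] [DecidableEq V] (G : SimpleGraph V)
    [DecidableRel G.Adj] {A B : Finset V} (h : A ⊆ B) (v : V) : degIn G A v ≤ degIn G B v :=
  card_le_card (filter_subset_filter _ h)

theorem IsProtected.mono {V : Type*} [Fintype V] [DecidableEq V] {G : SimpleGraph V}
    [DecidableRel G.Adj] {A B : Finset V} (h : A ⊆ B) {v : V} (hv : IsProtected G A v) :
    IsProtected G B v :=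
  calc degIn G Bᶜ v ≤ degIn G Aᶜ v := degIn_mono G (compl_subset_compl.2 h) v
    _ ≤ degIn G A v + 1 := hv
    _ ≤ degIn G B v + 1 := Nat.add_le_add_right (degIn_mono G h v) 1

/-- The transposition of `u` and `v` is a graph automorphism, so if it also preserves `A` then the two
vertices have equally many neighbours in `A`. Adjacent and non-adjacent twins are both covered. -/
theorem degIn_eq_of_twin {V : Type*} [Fintype V] [DecidableEq V] (G : SimpleGraph V)
    [DecidableRel G.Adj] {u v : V}
    (h : (G.neighborFinset u).erase v = (G.neighborFinset v).erase u)
    {A : Finset V} (hA : u ∈ A ↔ v ∈ A) : degIn G A u = degIn G A v := by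
  have he : (A.filter (G.Adj u)).erase v = (A.filter (G.Adj v)).erase u := by
    ext w
    have := Finset.ext_iff.1 h w
    simp only [mem_erase, mem_filter, SimpleGraph.mem_neighborFinset] at this ⊢
    tauto
  have hmem : v ∈ A.filter (G.Adj u) ↔ u ∈ A.filter (G.Adj v) := by
    simp only [mem_filter, G.adj_comm u v, hA]
  unfold degIn
  by_cases hv : v ∈ A.filter (G.Adj u)
  · rw [← card_erase_add_one hv, ← card_erase_add_one (hmem.1 hv), he]
  · rw [← erase_eq_of_notMem hv, ← erase_eq_of_notMem (fun hu => hv (hmem.2 hu)), he]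

/-- Protection passes between twins that both lie in `A`. -/
theorem IsProtected.of_twin {V : Type*} [Fintype V] [DecidableEq V] {G : SimpleGraph V}
    [DecidableRel G.Adj] {u v : V}
    (h : (G.neighborFinset u).erase v = (G.neighborFinset v).erase u)
    {A : Finset V} (hu : u ∈ A) (hv : v ∈ A) (hp : IsProtected G A u) : IsProtected G A v := by
  unfold IsProtected at hp ⊢
  rwa [← degIn_eq_of_twin G h (A := A) (by simp [hu, hv]),
    ← degIn_eq_of_twin G h (A := Aᶜ) (by simp [hu, hv])]

theorem no_defensiveAlliance_below_of_no_adjacent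
    {V : Type*} [Fintype V] [DecidableEq V] (G : SimpleGraph V) [DecidableRel G.Adj]
    (k : ℕ) (C : Fin k → Finset V)
    (hpart : ∀ v : V, ∃! i, v ∈ C i)
    (htype : ∀ i, ∀ u ∈ C i, ∀ v ∈ C i,
      (G.neighborFinset u).erase v = (G.neighborFinset v).erase u)
    (S : Finset V)
    (hyp : ∀ T : Finset V, T.Nonempty →
        (∀ i, (T ∩ C i).card = 0 ∨ (T ∩ C i).card = (S ∩ C i).card - 1 ∨
          (T ∩ C i).card = (S ∩ C i).card) →
        (∃ i, (T ∩ C i).card ≠ (S ∩ C i).card) →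
        ¬ IsDefensiveAlliance G T) :
    ∀ T : Finset V, T.Nonempty →
      (∀ i, (T ∩ C i).card ≤ (S ∩ C i).card) →
      (∃ i, (T ∩ C i).card ≠ (S ∩ C i).card) →
      ¬ IsDefensiveAlliance G T := by
  classical
  rintro T hne hle ⟨j, hj⟩ ⟨-, hT⟩
  have hlt : (T ∩ C j).card < (S ∩ C j).card := lt_of_le_of_ne (hle j) hj
  have hex : ∀ i, ∃ D : Finset V, T ∩ C i ⊆ D ∧ D ⊆ C i ∧
      D.card = if (T ∩ C i).card = 0 then 0 else
        if i = j then (S ∩ C i).card - 1 else (S ∩ C i).card := by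
    intro i
    have hS : (S ∩ C i).card ≤ (C i).card := card_le_card inter_subset_right
    have hi := hle i
    apply exists_subsuperset_card_eq inter_subset_right
    · split_ifs with h0 hij
      · omega
      · subst hij; omega
      · exact hi
    · split_ifs <;> omega
  choose D hTD hDC hcard using hex
  set T' : Finset V := univ.biUnion D with hT'
  have hinter : ∀ i, T' ∩ C i = D i := by
    intro i
    ext v
    simp only [hT', mem_inter, mem_biUnion, mem_univ, true_and]
    constructor
    · rintro ⟨⟨l, hl⟩, hi⟩
      rwa [(hpart v).unique hi (hDC l hl)]
    · exact fun h => ⟨⟨i, h⟩, hDC i h⟩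
  have hsub : T ⊆ T' := by
    intro v hv
    obtain ⟨i, hi, -⟩ := hpart v
    exact mem_biUnion.2 ⟨i, mem_univ i, hTD i (mem_inter.2 ⟨hv, hi⟩)⟩
  refine hyp T' (hne.mono hsub) (fun i => ?_) ⟨j, ?_⟩ ⟨hne.mono hsub, fun v hv => ?_⟩
  · rw [hinter, hcard]
    split_ifs <;> simp
  · rw [hinter, hcard, if_pos rfl]
    split_ifs <;> omega
  · obtain ⟨i, -, hvi⟩ := mem_biUnion.1 hv
    -- The class of `v` meets `T`, since classes missed by `T` were left empty.
    have hpos : (T ∩ C i).card ≠ 0 := by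
      intro h0
      have hD := hcard i
      rw [if_pos h0] at hD
      exact (card_ne_zero_of_mem hvi) hD
    obtain ⟨u, hu⟩ := card_ne_zero.1 hpos
    obtain ⟨huT, huC⟩ := mem_inter.1 hu
    exact ((hT u huT).mono hsub).of_twin (htype i u huC v (hDC i hvi)) (hsub huT) hv
end

section
/- Let k ≥ 1 and let G be an s-regular finite simple graph on n vertices with n ≥ 2k + 1 and s ≤ n − 2. Construct the graph G' as follows: the vertices of G' are the vertices of G, a set Z = {z_1,…,z_{n−2k}} forming a clique, a vertex r, a set V_r of n − 2k new vertices each adjacent only to r, and for each vertex u of G a set V_u of n − s − 2 new vertices each adjacent only to u; every vertex of Z is adjacent to every vertex of G and to r; all edges of G are retained. If C is a clique of size k in G, then S = C ∪ Z ∪ {r} is a globally minimal defensive alliance in G' containing r. -/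
/-!
Every vertex of `S = C ∪ Z ∪ {r}` has exactly as many neighbours inside `S` as outside it
(`degIn_univ_eq_two_mul`): `n - k - 1` of each for a vertex of `C`, `n - k` for a vertex of `Z`,
and `n - 2k` for `r`. So `S` is a defensive alliance. By parity, moving a single neighbour out of
`S` already leaves a vertex of `S` unprotected, so a defensive alliance `T ⊆ S` contains
the `S`-neighbours of each of its vertices (`mem_of_isProtected_of_balanced`). Since `Z` is
non-empty and each of its vertices is adjacent to all other vertices of `S`, such a `T` is all of
`S`.
-/


open Finset

/-- Vertex set of the reduced graph `G'`: original vertices of `G`, the clique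
`Z` (of size `m = n - 2k`), the root `r`, the pendant set `V_r` (of size `m`),
and for each `u` a pendant set `V_u` (of size `p = n - s - 2`). -/
abbrev RVert (V : Type*) (m p : ℕ) : Type _ :=
  V ⊕ Fin m ⊕ Unit ⊕ Fin m ⊕ (V × Fin p)

/-- Base (one-sided) adjacency relation of the reduced graph. -/
def baseRel {V : Type*} [DecidableEq V] (G : SimpleGraph V) [DecidableRel G.Adj] {m p : ℕ} :
    RVert V m p → RVert V m p → Bool
  | Sum.inl u, Sum.inl v => decide (G.Adj u v)                           -- edges of G retained
  | Sum.inr (Sum.inl _), Sum.inl _ => true                               -- Z to every vertex of G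
  | Sum.inr (Sum.inl _), Sum.inr (Sum.inl _) => true                     -- Z is a clique
  | Sum.inr (Sum.inl _), Sum.inr (Sum.inr (Sum.inl _)) => true           -- Z to r
  | Sum.inr (Sum.inr (Sum.inl _)), Sum.inr (Sum.inr (Sum.inr (Sum.inl _))) => true -- r to V_r
  | Sum.inl u, Sum.inr (Sum.inr (Sum.inr (Sum.inr (u', _)))) => decide (u = u')    -- u to V_u
  | _, _ => false

/-- The reduced graph `G'`. -/
def Gprime {V : Type*} [DecidableEq V] (G : SimpleGraph V) [DecidableRel G.Adj] (m p : ℕ) :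
    SimpleGraph (RVert V m p) :=
  SimpleGraph.fromRel (fun a b => baseRel G a b = true)

instance {V : Type*} [DecidableEq V] (G : SimpleGraph V) [DecidableRel G.Adj] (m p : ℕ) :
    DecidableRel (Gprime G m p).Adj := fun a b =>
  decidable_of_iff (a ≠ b ∧ (baseRel G a b = true ∨ baseRel G b a = true)) Iff.rfl

/-- The root vertex `r` of the reduced graph. -/
def rootVert (V : Type*) (m p : ℕ) : RVert V m p := Sum.inr (Sum.inr (Sum.inl ()))

/-- The set `S = C ∪ Z ∪ {r}` inside the reduced graph. -/
def Sconstruct {V : Type*} [Fintype V] [DecidableEq V] (C : Finset V) (m p : ℕ) :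
    Finset (RVert V m p) :=
  C.image Sum.inl ∪
    Finset.univ.image (fun i : Fin m => (Sum.inr (Sum.inl i) : RVert V m p)) ∪
    {rootVert V m p}

lemma degIn_add_degIn_compl {W : Type*} [Fintype W] [DecidableEq W] (H : SimpleGraph W)
    [DecidableRel H.Adj] (S : Finset W) (v : W) :
    degIn H S v + degIn H Sᶜ v = degIn H univ v := by
  unfold degIn
  rw [← card_union_of_disjoint (disjoint_filter_filter disjoint_compl_right), ← filter_union,
    union_compl]

/-- If exactly half of the neighbours of `v` lie in `S`, then `v` can only be protected in a
subset `T` of `S` when `T` contains all those neighbours. -/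
lemma mem_of_isProtected_of_balanced {W : Type*} [Fintype W] [DecidableEq W] (H : SimpleGraph W)
    [DecidableRel H.Adj] {S T : Finset W} {v u : W} (hTS : T ⊆ S)
    (hb : degIn H univ v = 2 * degIn H S v) (hv : IsProtected H T v) (hu : u ∈ S)
    (hvu : H.Adj v u) : u ∈ T := by
  have h1 := degIn_add_degIn_compl H T v
  unfold IsProtected at hv
  have h2 : degIn H S v ≤ degIn H T v := by omega
  have h3 := eq_of_subset_of_card_le (filter_subset_filter (fun u => H.Adj v u) hTS) h2
  have h4 : u ∈ T.filter (fun u => H.Adj v u) := by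
    rw [h3]
    exact mem_filter.2 ⟨hu, hvu⟩
  exact (mem_filter.1 h4).1

/-- The number of neighbours in a set as an indicator sum, the form in which it splits over the
summands of the vertex type `RVert`. -/
lemma degIn_eq_sum {W : Type*} [Fintype W] [DecidableEq W] (H : SimpleGraph W)
    [DecidableRel H.Adj] (S : Finset W) (v : W) :
    degIn H S v = ∑ u, if u ∈ S ∧ H.Adj v u then 1 else 0 := by
  rw [degIn, card_filter, ← sum_filter_add_sum_filter_not univ (· ∈ S)]
  simp [ite_and]

lemma card_adj_eq_degree {V : Type*} [Fintype V] [DecidableEq V] (G : SimpleGraph V)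
    [DecidableRel G.Adj] (u : V) : #{v | G.Adj u v} = G.degree u := by
  rw [← SimpleGraph.card_neighborFinset_eq_degree, SimpleGraph.neighborFinset_eq_filter]

lemma card_clique_neighbours {V : Type*} [Fintype V] [DecidableEq V] (G : SimpleGraph V)
    [DecidableRel G.Adj] {k : ℕ} {C : Finset V} (hC : G.IsNClique k C) {u : V} (hu : u ∈ C) :
    #{v | v ∈ C ∧ G.Adj u v} = k - 1 := by
  rw [← hC.card_eq, ← card_erase_of_mem hu]
  congr 1
  ext v
  simp only [mem_filter, mem_univ, true_and, mem_erase]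
  exact ⟨fun h => ⟨h.2.ne', h.1⟩, fun h => ⟨h.2, hC.isClique hu h.2 h.1.symm⟩⟩

/-- Every vertex of `C ∪ Z ∪ {r}` has exactly half of its neighbours in `C ∪ Z ∪ {r}`. -/
lemma degIn_univ_eq_two_mul {V : Type*} [Fintype V] [DecidableEq V] (G : SimpleGraph V)
    [DecidableRel G.Adj] {n s k : ℕ} (hn : n = Fintype.card V) (hreg : G.IsRegularOfDegree s)
    (hk : 1 ≤ k) (hnk : 2 * k + 1 ≤ n) (hs : s ≤ n - 2)
    {C : Finset V} (hC : G.IsNClique k C) {v : RVert V (n - 2 * k) (n - s - 2)}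
    (hv : v ∈ Sconstruct C (n - 2 * k) (n - s - 2)) :
    degIn (Gprime G (n - 2 * k) (n - s - 2)) univ v =
      2 * degIn (Gprime G (n - 2 * k) (n - s - 2)) (Sconstruct C (n - 2 * k) (n - s - 2)) v := by
  simp only [degIn_eq_sum, Fintype.sum_sum_type, Fintype.sum_prod_type]
  rcases v with u | i | _ | j | ⟨u, j⟩
  · have hu : u ∈ C := by simpa [Sconstruct, rootVert] using hv
    have h1 := card_clique_neighbours G hC hu
    have h2 := (card_adj_eq_degree G u).trans (hreg u)
    have hne : ∀ x, (¬u = x ∧ G.Adj u x) ↔ G.Adj u x := fun x => and_iff_right_of_imp (·.ne)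
    simp [Sconstruct, rootVert, Gprime, baseRel, G.adj_comm _ u, hne, h1, h2]
    omega
  · have h1 : (∑ x : Fin (n - 2 * k), if i = x then 0 else 1) = n - 2 * k - 1 := by
      have h := card_erase_of_mem (mem_univ i)
      rw [card_univ, Fintype.card_fin] at h
      rw [← h, ← filter_ne univ i, card_filter]
      exact sum_congr rfl fun x _ => by by_cases hx : i = x <;> simp [hx]
    have h2 := hC.card_eq
    simp [Sconstruct, rootVert, Gprime, baseRel, h1]
    omega
  · simp [Sconstruct, rootVert, Gprime, baseRel]
    omega
  · simp [Sconstruct, rootVert] at hv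
  · simp [Sconstruct, rootVert] at hv

theorem clique_gives_globallyMinimal_in_reduction
    {V : Type*} [Fintype V] [DecidableEq V] (G : SimpleGraph V) [DecidableRel G.Adj]
    (n s k : ℕ) (hn : n = Fintype.card V) (hreg : G.IsRegularOfDegree s)
    (hk : 1 ≤ k) (hnk : 2 * k + 1 ≤ n) (hs : s ≤ n - 2)
    (C : Finset V) (hC : G.IsNClique k C) :
    IsGloballyMinimalDA (Gprime G (n - 2 * k) (n - s - 2))
        (Sconstruct C (n - 2 * k) (n - s - 2)) ∧
      rootVert V (n - 2 * k) (n - s - 2) ∈ Sconstruct C (n - 2 * k) (n - s - 2) := by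
  have hroot : rootVert V (n - 2 * k) (n - s - 2) ∈ Sconstruct C (n - 2 * k) (n - s - 2) := by
    simp [Sconstruct]
  refine ⟨⟨⟨⟨_, hroot⟩, fun v hv => ?_⟩, ?_⟩, hroot⟩
  · have h1 := degIn_univ_eq_two_mul G hn hreg hk hnk hs hC hv
    have h2 := degIn_add_degIn_compl (Gprime G (n - 2 * k) (n - s - 2))
      (Sconstruct C (n - 2 * k) (n - s - 2)) v
    unfold IsProtected
    omega
  · rintro T hT ⟨⟨v, hv⟩, hprot⟩
    have hclosed : ∀ a ∈ T, ∀ b ∈ Sconstruct C (n - 2 * k) (n - s - 2),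
        (Gprime G (n - 2 * k) (n - s - 2)).Adj a b → b ∈ T := fun a ha b hb hab =>
      mem_of_isProtected_of_balanced _ hT.1
        (degIn_univ_eq_two_mul G hn hreg hk hnk hs hC (hT.1 ha)) (hprot a ha) hb hab
    -- Any vertex of `Z` serves as a hub: it is adjacent to every other vertex of `S`.
    let z : RVert V (n - 2 * k) (n - s - 2) := Sum.inr (Sum.inl ⟨0, by omega⟩)
    have hzS : z ∈ Sconstruct C (n - 2 * k) (n - s - 2) := by
      simp [Sconstruct, z]
    have hzadj : ∀ b ∈ Sconstruct C (n - 2 * k) (n - s - 2), b ≠ z →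
        (Gprime G (n - 2 * k) (n - s - 2)).Adj z b := by
      rintro (u | i | _ | j | ⟨u, j⟩) hb hne
      · simp [Gprime, baseRel, z]
      · exact ⟨hne.symm, by simp [baseRel, z]⟩
      · simp [Gprime, baseRel, z]
      · simp [Sconstruct, rootVert] at hb
      · simp [Sconstruct, rootVert] at hb
    have hzT : z ∈ T := by
      by_cases hvz : v = z
      · exact hvz ▸ hv
      · exact hclosed v hv z hzS (hzadj v (hT.1 hv) hvz).symm
    refine hT.2 fun b hb => ?_
    by_cases hbz : b = z
    · exact hbz ▸ hzT
    · exact hclosed z hzT b hb (hzadj b hb hbz)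
end
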